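/- arXiv:0903.2508 — 2 statements merged into one kernel-verified Lean document; each statement's English description precedes it below -/
import Mathlib

section
/- For every integer d ≥ 2, every subset A ⊆ F_q, every index i with 1 ≤ i ≤ d, and every tuple (y_i, y_{i+1}, …, y_d) ∈ F_q^{d−i+1} with y_i ≠ 0, one has g(0, …, 0, y_i, y_{i+1}, …, y_d) ≤ N_{d−1}(A; (−1)^i y_i). -/
/-- `matCount F d A t` is the number of `d × d` matrices over `F` all of whose entries
lie in `A` and whose determinant equals `t`. -/
noncomputable def matCount (F : Type) [CommRing F] [Fintype F] (d : ℕ) (A : Finset F) (t : F) : ℕ :=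
  Nat.card {M : Matrix (Fin d) (Fin d) F // (∀ i j, M i j ∈ A) ∧ M.det = t}

/-- For a `(d-1) × d` matrix `M` (here `d = e + 1`), `vmat M` is the vector whose `i`-th
coordinate is `(-1)^(i+1)` times the determinant of the minor of `M` obtained by deleting
the `i`-th column (indices `0`-based, corresponding to `(-1)^i det M_i` with `1`-based `i`). -/
def vmat {F : Type} [CommRing F] {e : ℕ} (M : Matrix (Fin e) (Fin (e + 1)) F) :
    Fin (e + 1) → F :=
  fun i => (-1 : F) ^ ((i : ℕ) + 1) * (M.submatrix id i.succAbove).det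

/-- `gcount F e A x` is the number of `(d-1) × d` matrices `M` (with `d = e + 1`) over `F`
with all entries in `A` such that `vmat M = x`. -/
noncomputable def gcount (F : Type) [CommRing F] [Fintype F] (e : ℕ) (A : Finset F)
    (x : Fin (e + 1) → F) : ℕ :=
  Nat.card {M : Matrix (Fin e) (Fin (e + 1)) F // (∀ i j, M i j ∈ A) ∧ vmat M = x}

/-!
The vector `vmat M` is a generalised cross product of the rows of `M`: up to sign, pairing it with
`v` is the determinant of `M` with `v` prepended as a row. It is therefore orthogonal to every row
of `M`, so once `vmat M = x` is prescribed and `x i` is cancellable, column `i` of `M` is determined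
by the other columns. Deleting column `i` is thus injective on the matrices counted by `gcount`,
and `x i` prescribes the determinant of the remaining square matrix.
-/

open Matrix

section LinearSystem

variable {m n R : Type*} [Fintype n] [NonUnitalNonAssocSemiring R] [IsRightCancelAdd R]

theorem eq_of_mulVec_eq_of_forall_ne {M N : Matrix m n R} {x : n → R} {i : n}
    (hx : IsRightRegular (x i)) (hmul : M *ᵥ x = N *ᵥ x)
    (hcol : ∀ a, ∀ j ≠ i, M a j = N a j) : M = N := by
  classical
  ext a j
  obtain rfl | hj := eq_or_ne j i
  · have hrow : ∑ k, M a k * x k = ∑ k, N a k * x k := congrFun hmul a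
    have hrest : ∑ k ∈ {j}ᶜ, M a k * x k = ∑ k ∈ {j}ᶜ, N a k * x k :=
      Finset.sum_congr rfl fun k hk => by rw [hcol a k (by simpa using hk)]
    rw [Fintype.sum_eq_add_sum_compl j, Fintype.sum_eq_add_sum_compl j, hrest] at hrow
    exact hx (add_right_cancel hrow)
  · exact hcol a j hj

end LinearSystem

section SignedMinors

variable {R : Type} [CommRing R] {e : ℕ}

theorem det_submatrix_succAbove_eq_vmat (M : Matrix (Fin e) (Fin (e + 1)) R) (i : Fin (e + 1)) :
    (M.submatrix id i.succAbove).det = (-1) ^ ((i : ℕ) + 1) * vmat M i := by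
  rw [vmat, ← mul_assoc, ← mul_pow, neg_one_mul, neg_neg, one_pow, one_mul]

theorem det_vecCons_eq_neg_dotProduct_vmat (v : Fin (e + 1) → R)
    (M : Matrix (Fin e) (Fin (e + 1)) R) :
    (of (vecCons v (of.symm M))).det = -(v ⬝ᵥ vmat M) := by
  rw [det_succ_row_zero, dotProduct, ← Finset.sum_neg_distrib]
  refine Finset.sum_congr rfl fun j _ => ?_
  have hminor : (of (vecCons v (of.symm M))).submatrix Fin.succ j.succAbove =
      M.submatrix id j.succAbove := rfl
  rw [hminor, of_apply, cons_val_zero, vmat]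
  ring

theorem mulVec_vmat (M : Matrix (Fin e) (Fin (e + 1)) R) : M *ᵥ vmat M = 0 := by
  ext r
  have hdet : (of (vecCons (M r) (of.symm M))).det = 0 :=
    det_zero_of_row_eq (Fin.succ_ne_zero r).symm rfl
  rwa [det_vecCons_eq_neg_dotProduct_vmat, neg_eq_zero] at hdet

theorem injOn_submatrix_succAbove_of_vmat_eq {x : Fin (e + 1) → R} {i : Fin (e + 1)}
    (hx : IsRegular (x i)) :
    Set.InjOn (fun M : Matrix (Fin e) (Fin (e + 1)) R => M.submatrix id i.succAbove)
      {M | vmat M = x} := by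
  rintro M rfl N (hN : vmat N = vmat M) hsub
  refine eq_of_mulVec_eq_of_forall_ne hx.right ?_ fun a j hj => ?_
  · rw [mulVec_vmat, ← hN, mulVec_vmat]
  · obtain ⟨b, rfl⟩ := Fin.exists_succAbove_eq hj
    exact congrFun₂ hsub a b

end SignedMinors

theorem stmt_4_general (R : Type) [CommRing R] [Fintype R] (e : ℕ) (A : Finset R)
    (i : Fin (e + 1)) (x : Fin (e + 1) → R) (hx : IsRegular (x i)) :
    gcount R e A x ≤ matCount R e A ((-1 : R) ^ ((i : ℕ) + 1) * x i) := by
  refine Nat.card_le_card_of_injective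
    (fun M => ⟨M.1.submatrix id i.succAbove, fun a b => M.2.1 a (i.succAbove b), ?_⟩) ?_
  · rw [det_submatrix_succAbove_eq_vmat, M.2.2]
  · intro M N hMN
    exact Subtype.ext (injOn_submatrix_succAbove_of_vmat_eq hx M.2.2 N.2.2
      (congrArg Subtype.val hMN))

/-- Statement 4, with `d = e + 1 ≥ 2` and the index `i : Fin (e + 1)` corresponding to the
`1`-based index `i + 1 ∈ {1, …, d}`; a tuple `(0, …, 0, y_i, …, y_d)` with `y_i ≠ 0` is a
vector `x` vanishing at coordinates before `i` and nonzero at `i`. -/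
theorem stmt_4 (F : Type) [Field F] [Fintype F]
    (hq : Odd (Fintype.card F)) (e : ℕ) (he : 1 ≤ e) (A : Finset F) (i : Fin (e + 1))
    (x : Fin (e + 1) → F) (h0 : ∀ j, j < i → x j = 0) (hx : x i ≠ 0) :
    gcount F e A x ≤ matCount F e A ((-1 : F) ^ ((i : ℕ) + 1) * x i) := by
  exact stmt_4_general F e A i x (IsRegular.of_ne_zero hx)
end

section
/- For every integer d ≥ 2 and every subset A ⊆ F_q, one has Σ_{l ∈ F_q, l ≠ 0} N_d(A;l)² ≤ |A|^{2d²}/q + q^{d−1} · |A|^{d+1} · (Σ_{i=0}^{d−1} |A|^i) · Σ_{l ∈ F_q, l ≠ 0} N_{d−1}(A;l)². -/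
open Finset Matrix Module

section Collisions

variable {ι κ α β : Type*} [DecidableEq α] [DecidableEq β]

/-- The number of collisions of `f` on `S`: ordered pairs of elements of `S`, diagonal pairs
included, on which `f` takes equal values. This is the second moment of the fibre sizes of `f`. -/
def collisionCount (S : Finset ι) (f : ι → α) : ℕ :=
  #{p ∈ S ×ˢ S | f p.1 = f p.2}

/-- The squared `ℓ²`-distance between the fibre sizes of `f` on `S` and the constant function
`#S / |α|`, to which they would all be equal if `f` were equidistributed. -/
noncomputable def sqDeviation [Fintype α] (S : Finset ι) (f : ι → α) : ℝ :=
  ∑ a, (#{i ∈ S | f i = a} - #S / Fintype.card α : ℝ) ^ 2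

theorem sum_card_fiber_sq_eq_collisionCount {S : Finset ι} {t : Finset α} {f : ι → α}
    (hf : Set.MapsTo f S t) : ∑ a ∈ t, #{i ∈ S | f i = a} ^ 2 = collisionCount S f := by
  rw [collisionCount, card_eq_sum_card_fiberwise (f := fun p => f p.1) (t := t)
    fun p hp => hf (mem_product.1 (mem_filter.1 hp).1).1]
  refine sum_congr rfl fun a _ => ?_
  rw [sq, ← card_product]
  congr 1
  grind

theorem collisionCount_le_of_injOn {S : Finset ι} {T : Finset κ} {f : ι → α} {g : κ → α}
    (e : ι → κ) (he : Set.MapsTo e S T) (hinj : Set.InjOn e S) (hfg : ∀ i ∈ S, g (e i) = f i) :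
    collisionCount S f ≤ collisionCount T g := by
  refine card_le_card_of_injOn (Prod.map e e) (fun p hp => ?_) fun p hp p' hp' h => ?_
  · simp only [coe_filter, mem_product, Set.mem_ofPred_eq] at hp ⊢
    exact ⟨⟨he hp.1.1, he hp.1.2⟩, by simpa [hfg _ hp.1.1, hfg _ hp.1.2] using hp.2⟩
  · simp only [coe_filter, mem_product, Set.mem_ofPred_eq] at hp hp'
    exact Prod.ext (hinj hp.1.1 hp'.1.1 (congrArg Prod.fst h))
      (hinj hp.1.2 hp'.1.2 (congrArg Prod.snd h))

variable [Fintype α]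

theorem sqDeviation_equiv_comp [Fintype β] (e : α ≃ β) (S : Finset ι) (f : ι → α) :
    sqDeviation S (e ∘ f) = sqDeviation S f := by
  rw [sqDeviation, ← e.sum_comp]
  simp [sqDeviation, Fintype.card_congr e]

theorem sqDeviation_product_le (S : Finset ι) (T : Finset κ) (f : ι × κ → α) :
    sqDeviation (S ×ˢ T) f ≤ #S * ∑ i ∈ S, sqDeviation T fun k => f (i, k) := by
  have hfiber (a : α) : (#{p ∈ S ×ˢ T | f p = a} - #(S ×ˢ T) / Fintype.card α : ℝ) =
      ∑ i ∈ S, (#{k ∈ T | f (i, k) = a} - #T / Fintype.card α : ℝ) := by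
    simp only [card_filter, sum_product, card_product, sum_sub_distrib, sum_const, nsmul_eq_mul]
    push_cast
    ring
  calc sqDeviation (S ×ˢ T) f
      = ∑ a, (∑ i ∈ S, (#{k ∈ T | f (i, k) = a} - #T / Fintype.card α : ℝ)) ^ 2 := by
        simp only [sqDeviation, hfiber]
    _ ≤ ∑ a, #S * ∑ i ∈ S, (#{k ∈ T | f (i, k) = a} - #T / Fintype.card α : ℝ) ^ 2 :=
        sum_le_sum fun a _ => sq_sum_le_card_mul_sum_sq
    _ = #S * ∑ i ∈ S, sqDeviation T fun k => f (i, k) := by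
        rw [← mul_sum, sum_comm]
        rfl

theorem sqDeviation_eq [Nonempty α] (S : Finset ι) (f : ι → α) :
    sqDeviation S f = collisionCount S f - (#S : ℝ) ^ 2 / Fintype.card α := by
  have hmaps : Set.MapsTo f S (univ : Finset α) := fun _ _ => mem_coe.2 (mem_univ _)
  have hsum : ∑ a, (#{i ∈ S | f i = a} : ℝ) = #S := by
    exact_mod_cast (card_eq_sum_card_fiberwise hmaps).symm
  have hsq : ∑ a, (#{i ∈ S | f i = a} : ℝ) ^ 2 = collisionCount S f := by
    exact_mod_cast sum_card_fiber_sq_eq_collisionCount hmaps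
  simp only [sqDeviation, sub_sq, sum_add_distrib, sum_sub_distrib, ← sum_mul, ← mul_sum, hsum, hsq,
    sum_const, card_univ, nsmul_eq_mul]
  field_simp
  ring

end Collisions

theorem card_mul_sum_eq_sum_card_smul_mem {G V R : Type*} [Group G] [Fintype G] [MulAction G V]
    [Fintype V] [DecidableEq V] [NonAssocSemiring R] (X : Finset V) {φ : V → R}
    (hφ : ∀ (g : G) v, φ (g • v) = φ v) :
    Fintype.card G * ∑ x ∈ X, φ x = ∑ v, #{g : G | g • v ∈ X} * φ v := by
  have htranslate (g : G) : ∑ v, (if g • v ∈ X then φ v else 0) = ∑ x ∈ X, φ x := by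
    rw [← Equiv.sum_comp (MulAction.toPerm g⁻¹)]
    simp [hφ]
  calc Fintype.card G * ∑ x ∈ X, φ x = ∑ g : G, ∑ v, if g • v ∈ X then φ v else 0 := by
        simp only [htranslate, sum_const, card_univ, nsmul_eq_mul]
    _ = ∑ v, #{g : G | g • v ∈ X} * φ v := by
        rw [sum_comm]
        simp only [← sum_filter, sum_const, nsmul_eq_mul]

section DotProduct

variable {ι κ F : Type*} [Fintype κ] [DecidableEq κ] [Field F] [DecidableEq F]

theorem card_units_smul_mem_piFinset_le [Fintype F] (A : Finset F) (v : κ → F) :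
    #{t : Fˣ | t • v ∈ (Fintype.piFinset fun _ => A).erase 0} ≤ #A := by
  rcases eq_or_ne v 0 with rfl | hv
  · simp
  obtain ⟨k, hk⟩ := Function.ne_iff.1 hv
  refine card_le_card_of_injOn (fun t => (t • v) k) (fun t ht => ?_) fun t _ t' _ h => ?_
  · exact Fintype.mem_piFinset.1 (mem_of_mem_erase (mem_filter.1 ht).2) k
  · exact Units.ext (mul_right_cancel₀ hk h)

variable [Fintype F]

theorem card_mul_card_dotProduct_eq_zero {w : κ → F} (hw : w ≠ 0) :
    Fintype.card F * #{z : κ → F | z ⬝ᵥ w = 0} = Fintype.card F ^ Fintype.card κ := by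
  let φ : Dual F (κ → F) := dotProductBilin F F w
  have hφ : φ ≠ 0 := fun h => hw <| dotProduct_eq_zero w fun z => DFunLike.congr_fun h z
  have hfiber (t : F) : #{z | φ z = t} = #{z : κ → F | z ⬝ᵥ w = 0} := by
    rw [AddMonoidHom.card_fiber_eq_of_mem_range φ (LinearMap.surjective hφ t)
      (LinearMap.surjective hφ 0)]
    simp [φ, dotProduct_comm]
  calc Fintype.card F * #{z : κ → F | z ⬝ᵥ w = 0} = ∑ t, #{z | φ z = t} := by
        simp [hfiber]
    _ = #(univ : Finset (κ → F)) :=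
        (card_eq_sum_card_fiberwise fun _ _ => mem_coe.2 (mem_univ _)).symm
    _ = Fintype.card F ^ Fintype.card κ := by simp

theorem sum_collisionCount_dotProduct (T : Finset ι) (c : ι → κ → F) :
    ∑ z : κ → F, (collisionCount T fun i => z ⬝ᵥ c i : ℝ) =
      Fintype.card F ^ Fintype.card κ *
        ((#T : ℝ) ^ 2 / Fintype.card F + (1 - (Fintype.card F : ℝ)⁻¹) * collisionCount T c) := by
  have hpair (p : ι × ι) : (#{z : κ → F | z ⬝ᵥ c p.1 = z ⬝ᵥ c p.2} : ℝ) =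
      Fintype.card F ^ Fintype.card κ *
        ((Fintype.card F : ℝ)⁻¹ + if c p.1 = c p.2 then 1 - (Fintype.card F : ℝ)⁻¹ else 0) := by
    split_ifs with h
    · simp [h]
    · have hcard := card_mul_card_dotProduct_eq_zero (sub_ne_zero.2 h)
      simp only [dotProduct_sub, sub_eq_zero] at hcard
      rw [← Nat.cast_pow, ← hcard]
      push_cast
      field_simp
      simp
  calc ∑ z : κ → F, (collisionCount T fun i => z ⬝ᵥ c i : ℝ)
      = ∑ p ∈ T ×ˢ T, (#{z : κ → F | z ⬝ᵥ c p.1 = z ⬝ᵥ c p.2} : ℝ) := by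
        simp only [collisionCount, card_filter, Nat.cast_sum]
        exact sum_comm
    _ = _ := by
        simp only [hpair, ← mul_sum, sum_add_distrib, ← sum_filter, sum_const, nsmul_eq_mul,
          card_product, collisionCount]
        push_cast
        ring

theorem sum_sqDeviation_dotProduct (T : Finset ι) (c : ι → κ → F) :
    ∑ z : κ → F, sqDeviation T (fun i => z ⬝ᵥ c i) =
      (Fintype.card F - 1) * (Fintype.card F ^ Fintype.card κ / Fintype.card F *
        collisionCount T c) := by
  simp only [sqDeviation_eq, sum_sub_distrib, sum_collisionCount_dotProduct, sum_const, card_univ,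
    Fintype.card_fun, nsmul_eq_mul]
  push_cast
  field_simp
  ring

theorem sum_sqDeviation_dotProduct_piFinset_le (A : Finset F) (T : Finset ι) (c : ι → κ → F) :
    ∑ x ∈ (Fintype.piFinset fun _ => A).erase 0, sqDeviation T (fun i => x ⬝ᵥ c i) ≤
      #A * (Fintype.card F ^ Fintype.card κ / Fintype.card F * collisionCount T c) := by
  have hq : (0 : ℝ) < Fintype.card F - 1 := sub_pos.2 (by exact_mod_cast Fintype.one_lt_card)
  have hunits : (Fintype.card Fˣ : ℝ) = Fintype.card F - 1 := by
    rw [Fintype.card_eq_card_units_add_one (α := F)]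
    simp
  have hinv (t : Fˣ) (z : κ → F) :
      sqDeviation T (fun i => (t • z) ⬝ᵥ c i) = sqDeviation T fun i => z ⬝ᵥ c i := by
    rw [← sqDeviation_equiv_comp (MulAction.toPerm t) T fun i => z ⬝ᵥ c i]
    congr 1
    funext i
    exact smul_dotProduct t z (c i)
  refine le_of_mul_le_mul_left ?_ hq
  calc (Fintype.card F - 1) *
        ∑ x ∈ (Fintype.piFinset fun _ => A).erase 0, sqDeviation T (fun i => x ⬝ᵥ c i)
      = ∑ z, #{t : Fˣ | t • z ∈ (Fintype.piFinset fun _ => A).erase 0} *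
          sqDeviation T (fun i => z ⬝ᵥ c i) := by
        rw [← hunits]
        exact card_mul_sum_eq_sum_card_smul_mem _ hinv
    _ ≤ ∑ z, #A * sqDeviation T (fun i => z ⬝ᵥ c i) := by
        refine sum_le_sum fun z _ => mul_le_mul_of_nonneg_right ?_ ?_
        · exact_mod_cast card_units_smul_mem_piFinset_le A z
        · exact sum_nonneg fun _ _ => sq_nonneg _
    _ = _ := by
        rw [← mul_sum, sum_sqDeviation_dotProduct]
        ring

theorem collisionCount_dotProduct_le (A : Finset F) (T : Finset ι) (c : ι → κ → F) :
    (collisionCount ((Fintype.piFinset fun _ => A).erase 0 ×ˢ T) fun p => p.1 ⬝ᵥ c p.2 : ℝ) ≤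
      ((#A : ℝ) ^ Fintype.card κ * #T) ^ 2 / Fintype.card F +
        (#A : ℝ) ^ Fintype.card κ *
          (#A * (Fintype.card F ^ Fintype.card κ / Fintype.card F * collisionCount T c)) := by
  set X : Finset (κ → F) := (Fintype.piFinset fun _ => A).erase 0
  have hX : (#X : ℝ) ≤ (#A : ℝ) ^ Fintype.card κ := by
    exact_mod_cast card_erase_le.trans_eq (by simp : #(Fintype.piFinset fun _ : κ => A) = _)
  calc (collisionCount (X ×ˢ T) fun p => p.1 ⬝ᵥ c p.2 : ℝ)
      = ((#X : ℝ) * #T) ^ 2 / Fintype.card F + sqDeviation (X ×ˢ T) fun p => p.1 ⬝ᵥ c p.2 := by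
        rw [sqDeviation_eq, card_product]
        push_cast
        ring
    _ ≤ ((#X : ℝ) * #T) ^ 2 / Fintype.card F +
          #X * ∑ x ∈ X, sqDeviation T fun i => x ⬝ᵥ c i := by
        gcongr
        exact sqDeviation_product_le X T _
    _ ≤ ((#X : ℝ) * #T) ^ 2 / Fintype.card F +
          #X * (#A * (Fintype.card F ^ Fintype.card κ / Fintype.card F * collisionCount T c)) := by
        gcongr
        exact sum_sqDeviation_dotProduct_piFinset_le A T c
    _ ≤ _ := by gcongr

end DotProduct

section Coordinates

variable {ι K : Type*} [Finite ι] [Field K]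

-- The coordinates come from a maximal independent family of coordinate functionals on `W`.
theorem exists_separating_coordinates_card_eq_finrank (W : Submodule K (ι → K)) :
    ∃ s : Finset ι, #s = finrank K W ∧ ∀ w ∈ W, (∀ i ∈ s, w i = 0) → w = 0 := by
  classical
  have := Fintype.ofFinite ι
  let coord (i : ι) : Dual K W := LinearMap.proj i ∘ₗ W.subtype
  obtain ⟨b, -, -, hspan, hindep⟩ :=
    exists_linearIndepOn_extension (linearIndepOn_empty K coord) (Set.subset_univ ∅)
  have hsep (w : W) (hw : ∀ i ∈ b, (w : ι → K) i = 0) : w = 0 := by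
    have hker : Submodule.span K (coord '' b) ≤ LinearMap.ker (Dual.eval K W w) :=
      Submodule.span_le.2 <| Set.forall_mem_image.2 hw
    ext i
    exact hker (hspan ⟨i, Set.mem_univ i, rfl⟩)
  refine ⟨b.toFinset, le_antisymm ?_ ?_, fun w hw h => ?_⟩
  · simpa [Set.toFinset_card] using LinearIndependent.fintype_card_le_finrank hindep
  · let restrict : W →ₗ[K] b → K := LinearMap.funLeft K K Subtype.val ∘ₗ W.subtype
    have hrestrict : Function.Injective restrict :=
      (injective_iff_map_eq_zero restrict).2 fun w hw => hsep w fun i hi => congrFun hw ⟨i, hi⟩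
    simpa [Set.toFinset_card] using LinearMap.finrank_le_finrank_of_injective hrestrict
  · exact congrArg Subtype.val (hsep ⟨w, hw⟩ fun i hi => h i (Set.mem_toFinset.2 hi))

theorem card_le_pow_finrank_of_sub_mem {A : Finset K} {S : Finset (ι → K)}
    (W : Submodule K (ι → K)) (hA : ∀ v ∈ S, ∀ i, v i ∈ A) (hW : ∀ v ∈ S, ∀ w ∈ S, v - w ∈ W) :
    #S ≤ #A ^ finrank K W := by
  classical
  obtain ⟨s, hs, hsep⟩ := exists_separating_coordinates_card_eq_finrank W
  calc #S ≤ #(Fintype.piFinset fun _ : s => A) := by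
        refine card_le_card_of_injOn (fun v i => v i)
          (fun v hv => mem_coe.2 <| Fintype.mem_piFinset.2 fun i => hA v hv i) fun v hv w hw h => ?_
        exact sub_eq_zero.1 <| hsep _ (hW v hv w hw) fun i hi =>
          sub_eq_zero.2 (congrFun h ⟨i, hi⟩)
    _ = #A ^ finrank K W := by simp [hs]

end Coordinates

section CofactorVector

variable {n : ℕ}

theorem eq_of_submatrix_succAbove_eq_of_col_eq {α m : Type*} {B B' : Matrix m (Fin (n + 1)) α}
    {j : Fin (n + 1)} (hsub : B.submatrix id j.succAbove = B'.submatrix id j.succAbove)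
    (hcol : B.col j = B'.col j) : B = B' := by
  refine ext_col fun k => ?_
  rcases Fin.eq_self_or_eq_succAbove j k with rfl | ⟨k, rfl⟩
  · exact hcol
  · exact congrArg (·.col k) hsub

/-- The vector of signed maximal minors of an `n × (n + 1)` matrix: `cofactorVec B k` is the
cofactor of the `k`-th entry of a row placed on top of `B`. -/
def cofactorVec {R : Type*} [CommRing R] (B : Matrix (Fin n) (Fin (n + 1)) R) : Fin (n + 1) → R :=
  fun k => (-1) ^ (k : ℕ) * (B.submatrix id k.succAbove).det

section CommRing

variable {R : Type*} [CommRing R] (B : Matrix (Fin n) (Fin (n + 1)) R)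

theorem det_of_vecCons (x : Fin (n + 1) → R) :
    (Matrix.of (vecCons x B)).det = x ⬝ᵥ cofactorVec B := by
  rw [det_succ_row_zero, dotProduct]
  refine sum_congr rfl fun k _ => ?_
  rw [mul_comm (_ ^ _), mul_assoc]
  rfl

theorem mulVec_cofactorVec : B *ᵥ cofactorVec B = 0 := by
  ext i
  rw [mulVec, ← det_of_vecCons]
  exact det_zero_of_row_eq (Fin.succ_ne_zero i).symm rfl

theorem cofactorVec_smul_col (j : Fin (n + 1)) :
    cofactorVec B j • B.col j =
      -∑ k, cofactorVec B (j.succAbove k) • B.col (j.succAbove k) := by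
  have h := mulVec_cofactorVec B
  rw [mulVec_eq_sum, Fin.sum_univ_succAbove _ j] at h
  simp only [op_smul_eq_smul] at h
  exact eq_neg_of_add_eq_zero_left h

variable {B} {B' : Matrix (Fin n) (Fin (n + 1)) R} {j : Fin (n + 1)}

theorem eq_of_submatrix_succAbove_eq_of_cofactorVec_eq [IsDomain R]
    (hsub : B.submatrix id j.succAbove = B'.submatrix id j.succAbove)
    (hcof : cofactorVec B = cofactorVec B') (hj : cofactorVec B j ≠ 0) : B = B' := by
  have hcols (k : Fin n) : B.col (j.succAbove k) = B'.col (j.succAbove k) :=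
    congrArg (·.col k) hsub
  refine eq_of_submatrix_succAbove_eq_of_col_eq hsub (smul_right_injective _ hj ?_)
  calc cofactorVec B j • B.col j = cofactorVec B' j • B'.col j := by
        rw [cofactorVec_smul_col, cofactorVec_smul_col, hcof]
        simp only [hcols]
    _ = cofactorVec B j • B'.col j := by rw [hcof]

end CommRing

variable {K : Type*} [Field K] {B : Matrix (Fin n) (Fin (n + 1)) K} {j : Fin (n + 1)}

theorem col_mem_span_of_maximal (hj : Maximal (cofactorVec B · ≠ 0) j) :
    B.col j ∈ Submodule.span K (B.col '' Set.Iio j) := by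
  rw [← Submodule.smul_mem_iff _ hj.prop, cofactorVec_smul_col]
  refine Submodule.neg_mem _ (Submodule.sum_mem _ fun k _ => ?_)
  rcases (Fin.succAbove_ne j k).lt_or_gt with hlt | hgt
  · exact Submodule.smul_mem _ _ (Submodule.subset_span ⟨_, hlt, rfl⟩)
  · rw [not_not.1 (hj.not_prop_of_gt hgt), zero_smul]
    exact Submodule.zero_mem _

theorem finrank_span_col_Iio (hj : cofactorVec B j ≠ 0) :
    finrank K (Submodule.span K (B.col '' Set.Iio j)) = j := by
  have hindep : LinearIndepOn K B.col (Set.Iio j) := by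
    refine LinearIndepOn.mono (s := {j}ᶜ) ?_ fun k (hk : k < j) => hk.ne
    rw [← Fin.range_succAbove, linearIndepOn_range_iff Fin.succAbove_right_injective]
    exact linearIndependent_cols_of_det_ne_zero (right_ne_zero_of_mul hj)
  rw [Set.image_eq_range, finrank_span_eq_card hindep]
  simp

end CofactorVector

section MatricesIn

/-- The matrices all of whose entries lie in `A`, as a finset: the finite form of `Set.matrix`. -/
def matricesIn {α : Type*} (m n : Type*) [Fintype m] [Fintype n] [DecidableEq m] [DecidableEq n]
    (A : Finset α) : Finset (Matrix m n α) :=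
  (Fintype.piFinset fun _ => Fintype.piFinset fun _ => A).map Matrix.of.toEmbedding

section Basic

variable {α m n : Type*} [Fintype m] [Fintype n] [DecidableEq m] [DecidableEq n] {A : Finset α}

theorem mem_matricesIn {M : Matrix m n α} : M ∈ matricesIn m n A ↔ ∀ i j, M i j ∈ A := by
  simp [matricesIn]

theorem card_matricesIn : #(matricesIn m n A) = #A ^ (Fintype.card m * Fintype.card n) := by
  simp [matricesIn, mul_comm (Fintype.card m), pow_mul]

end Basic

variable {K : Type*} [Field K] [DecidableEq K] {n : ℕ} (A : Finset K)

open Classical in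
theorem card_submatrix_succAbove_eq_le (j : Fin (n + 1)) (M : Matrix (Fin n) (Fin n) K) :
    #{B ∈ matricesIn (Fin n) (Fin (n + 1)) A |
      Maximal (cofactorVec B · ≠ 0) j ∧ B.submatrix id j.succAbove = M} ≤ #A ^ (j : ℕ) := by
  set S := {B ∈ matricesIn (Fin n) (Fin (n + 1)) A |
    Maximal (cofactorVec B · ≠ 0) j ∧ B.submatrix id j.succAbove = M} with hS
  have hmem {B} (hB : B ∈ S) : (∀ i k, B i k ∈ A) ∧ Maximal (cofactorVec B · ≠ 0) j ∧
      B.submatrix id j.succAbove = M := by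
    simpa only [hS, mem_filter, mem_matricesIn] using hB
  rcases S.eq_empty_or_nonempty with hempty | ⟨B₀, hB₀⟩
  · simp [hempty]
  have hcol {B} (hB : B ∈ S) : B.col j ∈ Submodule.span K (B₀.col '' Set.Iio j) := by
    have hcols : B.col '' Set.Iio j = B₀.col '' Set.Iio j := by
      refine Set.image_congr fun k hk => ?_
      obtain ⟨k, rfl⟩ := Fin.exists_succAbove_eq (ne_of_lt hk)
      exact congrArg (·.col k) ((hmem hB).2.2.trans (hmem hB₀).2.2.symm)
    exact hcols ▸ col_mem_span_of_maximal (hmem hB).2.1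
  have hinj : Set.InjOn (fun B : Matrix _ _ K => B.col j) S := fun B hB B' hB' h =>
    eq_of_submatrix_succAbove_eq_of_col_eq ((hmem hB).2.2.trans (hmem hB').2.2.symm) h
  rw [← card_image_of_injOn hinj, ← finrank_span_col_Iio (hmem hB₀).2.1.prop]
  refine card_le_pow_finrank_of_sub_mem _ ?_ ?_
  · exact forall_mem_image.2 fun B hB i => (hmem hB).1 i j
  · exact forall_mem_image.2 fun B hB => forall_mem_image.2 fun B' hB' =>
      Submodule.sub_mem _ (hcol hB) (hcol hB')

open Classical in
theorem card_cofactorVec_eq_of_maximal_le (j : Fin (n + 1)) :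
    #{p ∈ matricesIn (Fin n) (Fin (n + 1)) A ×ˢ matricesIn (Fin n) (Fin (n + 1)) A |
      cofactorVec p.1 = cofactorVec p.2 ∧ Maximal (cofactorVec p.1 · ≠ 0) j} ≤
    #A ^ (j : ℕ) * collisionCount {M ∈ matricesIn (Fin n) (Fin n) A | M.det ≠ 0} det := by
  let delete (B : Matrix (Fin n) (Fin (n + 1)) K) := B.submatrix id j.succAbove
  refine card_le_mul_card_image_of_maps_to (f := Prod.map delete delete) ?_ _ ?_
  · rintro ⟨B, B'⟩ hp
    simp only [mem_filter, mem_product, mem_matricesIn] at hp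
    obtain ⟨⟨hB, hB'⟩, hcof, hj⟩ := hp
    have hdet : (delete B).det = (delete B').det :=
      mul_left_cancel₀ (left_ne_zero_of_mul hj.prop) (congrFun hcof j)
    have hne : (delete B).det ≠ 0 := right_ne_zero_of_mul hj.prop
    simp only [mem_filter, mem_product, mem_matricesIn, Prod.map]
    exact ⟨⟨⟨fun _ _ => hB _ _, hne⟩, fun _ _ => hB' _ _, hdet ▸ hne⟩, hdet⟩
  · rintro ⟨M, M'⟩ -
    refine le_trans (card_le_card_of_injOn Prod.fst ?_ ?_) (card_submatrix_succAbove_eq_le A j M)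
    · rintro ⟨B, B'⟩ hp
      simp only [coe_filter, mem_filter, mem_product, Prod.map, Prod.mk.injEq,
        Set.mem_ofPred_eq] at hp ⊢
      exact ⟨hp.1.1.1, hp.1.2.2, hp.2.1⟩
    · rintro ⟨B, B'⟩ hp ⟨C, C'⟩ hp' (rfl : B = C)
      simp only [coe_filter, mem_filter, mem_product, Prod.map, Prod.mk.injEq,
        Set.mem_ofPred_eq] at hp hp'
      obtain ⟨⟨-, hcof, hj⟩, -, hM'⟩ := hp
      obtain ⟨⟨-, hcof', -⟩, -, hM''⟩ := hp'
      exact Prod.ext rfl <| eq_of_submatrix_succAbove_eq_of_cofactorVec_eq (hM'.trans hM''.symm)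
        (hcof.symm.trans hcof') (hcof ▸ hj.prop)

theorem collisionCount_cofactorVec_le :
    collisionCount {B ∈ matricesIn (Fin n) (Fin (n + 1)) A | cofactorVec B ≠ 0} cofactorVec ≤
      (∑ i ∈ range (n + 1), #A ^ i) *
        collisionCount {M ∈ matricesIn (Fin n) (Fin n) A | M.det ≠ 0} det := by
  classical
  rw [← Fin.sum_univ_eq_sum_range (fun i => #A ^ i), sum_mul]
  refine le_trans ((card_le_card fun p hp => ?_).trans card_biUnion_le)
    (sum_le_sum fun j _ => card_cofactorVec_eq_of_maximal_le A j)
  simp only [mem_filter, mem_product] at hp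
  obtain ⟨⟨⟨hB, hne⟩, hB', -⟩, hcof⟩ := hp
  obtain ⟨j, hj⟩ := (Set.toFinite {k | cofactorVec p.1 k ≠ 0}).exists_maximal
    (Function.ne_iff.1 hne)
  simp only [mem_biUnion, mem_filter, mem_product]
  exact ⟨j, mem_univ j, ⟨hB, hB'⟩, hcof, hj⟩

theorem collisionCount_det_le :
    collisionCount {M ∈ matricesIn (Fin (n + 1)) (Fin (n + 1)) A | M.det ≠ 0} det ≤
      collisionCount ((Fintype.piFinset fun _ => A).erase 0 ×ˢ
        {B ∈ matricesIn (Fin n) (Fin (n + 1)) A | cofactorVec B ≠ 0})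
          fun p => p.1 ⬝ᵥ cofactorVec p.2 := by
  have hcons (M : Matrix (Fin (n + 1)) (Fin (n + 1)) K) :
      Matrix.of (vecCons (M 0) (M.submatrix Fin.succ id)) = M := by
    ext i k
    cases i using Fin.cases <;> rfl
  have hdet (M : Matrix (Fin (n + 1)) (Fin (n + 1)) K) :
      M 0 ⬝ᵥ cofactorVec (M.submatrix Fin.succ id) = M.det := by
    rw [← det_of_vecCons, hcons]
  refine collisionCount_le_of_injOn (fun M => (M 0, M.submatrix Fin.succ id)) (fun M hM => ?_)
    (fun M _ M' _ h => ?_) fun M _ => hdet M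
  · simp only [coe_filter, mem_matricesIn, Set.mem_ofPred_eq] at hM
    simp only [coe_product, coe_filter, Set.mem_prod, mem_coe, mem_erase, Fintype.mem_piFinset,
      mem_matricesIn, Set.mem_ofPred_eq]
    refine ⟨⟨fun h => hM.2 ?_, hM.1 0⟩, fun i k => hM.1 i.succ k, fun h => hM.2 ?_⟩
    · rw [← hdet, h, zero_dotProduct]
    · rw [← hdet, h, dotProduct_zero]
  · obtain ⟨hrow, hrest⟩ := Prod.mk.inj h
    rw [← hcons M, hrow, hrest, hcons M']

end MatricesIn

section DeterminantMoments

variable {F : Type} [Field F] [Fintype F] [DecidableEq F]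

theorem matCount_eq_card (d : ℕ) (A : Finset F) (t : F) :
    matCount F d A t = #{M ∈ matricesIn (Fin d) (Fin d) A | M.det = t} := by
  simp only [matCount, ← mem_matricesIn, Nat.card_eq_fintype_card, Fintype.card_subtype,
    ← filter_filter, filter_mem_eq_inter, univ_inter]

theorem sum_matCount_sq (d : ℕ) (A : Finset F) :
    ∑ l ∈ univ.filter (fun l : F => l ≠ 0), matCount F d A l ^ 2 =
      collisionCount {M ∈ matricesIn (Fin d) (Fin d) A | M.det ≠ 0} det := by
  rw [← sum_card_fiber_sq_eq_collisionCount (t := univ.filter fun l : F => l ≠ 0)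
    fun M hM => by simpa using (mem_filter.1 hM).2]
  refine sum_congr rfl fun l hl => ?_
  rw [matCount_eq_card, filter_filter]
  congr 2
  grind

end DeterminantMoments

theorem stmt_7_general (F : Type) [Field F] [Fintype F] [DecidableEq F] (d : ℕ) (hd : 1 ≤ d)
    (A : Finset F) :
    ∑ l ∈ univ.filter (fun l : F => l ≠ 0), (matCount F d A l : ℝ) ^ 2 ≤
      (#A : ℝ) ^ (2 * d ^ 2) / (Fintype.card F : ℝ) +
        (Fintype.card F : ℝ) ^ (d - 1) * (#A : ℝ) ^ (d + 1) * (∑ i ∈ range d, (#A : ℝ) ^ i) *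
          ∑ l ∈ univ.filter (fun l : F => l ≠ 0), (matCount F (d - 1) A l : ℝ) ^ 2 := by
  obtain ⟨n, rfl⟩ := Nat.exists_eq_add_of_le' hd
  have hmoment (m : ℕ) : ∑ l ∈ univ.filter (fun l : F => l ≠ 0), (matCount F m A l : ℝ) ^ 2 =
      collisionCount {M ∈ matricesIn (Fin m) (Fin m) A | M.det ≠ 0} det := by
    exact_mod_cast sum_matCount_sq m A
  rw [hmoment, Nat.add_sub_cancel, hmoment]
  set T := {B ∈ matricesIn (Fin n) (Fin (n + 1)) A | cofactorVec B ≠ 0}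
  set E := collisionCount {M ∈ matricesIn (Fin n) (Fin n) A | M.det ≠ 0} det
  have hT : (#T : ℝ) ≤ (#A : ℝ) ^ (n * (n + 1)) := by
    exact_mod_cast (card_filter_le _ _).trans_eq (by simp [card_matricesIn])
  have hcofactor :
      (collisionCount T cofactorVec : ℝ) ≤ (∑ i ∈ range (n + 1), (#A : ℝ) ^ i) * E := by
    exact_mod_cast collisionCount_cofactorVec_le A
  calc (collisionCount {M ∈ matricesIn (Fin (n + 1)) (Fin (n + 1)) A | M.det ≠ 0} det : ℝ)
      ≤ collisionCount ((Fintype.piFinset fun _ => A).erase 0 ×ˢ T)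
          fun p => p.1 ⬝ᵥ cofactorVec p.2 := Nat.cast_le.2 (collisionCount_det_le A)
    _ ≤ ((#A : ℝ) ^ (n + 1) * #T) ^ 2 / Fintype.card F + (#A : ℝ) ^ (n + 1) *
          (#A * (Fintype.card F ^ (n + 1) / Fintype.card F * collisionCount T cofactorVec)) := by
        simpa only [Fintype.card_fin] using collisionCount_dotProduct_le A T cofactorVec
    _ ≤ ((#A : ℝ) ^ (n + 1) * (#A : ℝ) ^ (n * (n + 1))) ^ 2 / Fintype.card F +
          (#A : ℝ) ^ (n + 1) * (#A * (Fintype.card F ^ (n + 1) / Fintype.card F *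
            ((∑ i ∈ range (n + 1), (#A : ℝ) ^ i) * E))) := by gcongr
    _ = _ := by
        field_simp
        ring

theorem stmt_7 (F : Type) [Field F] [Fintype F] [DecidableEq F]
    (hq : Odd (Fintype.card F)) (d : ℕ) (hd : 2 ≤ d) (A : Finset F) :
    ∑ l ∈ Finset.univ.filter (fun l : F => l ≠ 0), (matCount F d A l : ℝ) ^ 2 ≤
      (A.card : ℝ) ^ (2 * d ^ 2) / (Fintype.card F : ℝ) +
        (Fintype.card F : ℝ) ^ (d - 1) * (A.card : ℝ) ^ (d + 1) *
            (∑ i ∈ Finset.range d, (A.card : ℝ) ^ i) *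
          ∑ l ∈ Finset.univ.filter (fun l : F => l ≠ 0), (matCount F (d - 1) A l : ℝ) ^ 2 :=
  stmt_7_general F d (by lia) A
end
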